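/- Fix an integer n ≥ 1 and let σ_n(a) := a · d/da log D_n(a) for a > 0. Then σ_n is twice differentiable on (0,∞) and satisfies, for every a > 0, the second order fourth degree differential equation 16[ a²σ_n'' + 4(σ_n + 2n a²)(a σ_n' − σ_n − a⁴) − 4a⁴ ] · [ a⁴(σ_n'')² − 4a² σ_n''(a σ_n' − σ_n) + 4(a σ_n' − σ_n − a⁴)(a σ_n' − 2σ_n)² ] = [ a²(σ_n'')² + 4( (σ_n')² + 8n(a σ_n' − σ_n) − 4a² )(a σ_n' − σ_n − a⁴) − 16a⁶ ]², where primes denote derivatives with respect to a. -/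

import Mathlib

/-!
The determinant is `D_n(a) = h_0 ⋯ h_{n-1}`, the product of the squared norms of the monic
orthogonal polynomials `P_k` of the gapped weight. Everything is governed by the endpoint quantities
`R_k = e^{-a²} P_k(a)² / h_k`, `r_k = e^{-a²} P_k(a) P_{k-1}(a) / h_{k-1}` and
`V_k = h_k R_{k-1} / h_{k-1}`, which satisfy `R_k V_k = r_k²`. Integration by parts gives
`2 h_{k+1} = (2 r_{k+1} + k + 1) h_k`, so `(R_{k+1}, r_{k+1}, V_{k+1})` is a rational function of
`(R_k, r_k, V_k)` and `a`. This transformation carries the first order differential system of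
index `k` to that of index `k + 1`, and for `k = 0` the system is just the derivative of
`e^{-a²} / ∫_{|x| ≥ a} e^{-x²} dx`; hence it holds for all `k`, with no need to differentiate the
orthogonal polynomials in `a`.

It follows that `h_k' = -2 R_k h_k`, so `σ_n = -2a (R_0 + ⋯ + R_{n-1})`, which is a polynomial in
`R_n`, `r_n`, `V_n` and `a`. By the system, with `w = 2 r_n - a²`, `a σ_n' - σ_n - a⁴ = -w²`, and
eliminating `R_n` and `V_n` gives a relation `e(w) = 0` with coefficients polynomial in `a`, `σ_n'`
and `σ_n''`. The sign of `w` is not determined by `σ_n`, and multiplying the two conjugate relations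
gives the equation of the theorem as `e(w) e(-w) = 0`.
-/

open MeasureTheory

/-- The `m`-th moment of the Gaussian weight `e^{-x^2}` on `ℝ` with the
interval `(-a, a)` excised. -/
noncomputable def gaussMoment (a : ℝ) (m : ℕ) : ℝ :=
  ∫ x in {x : ℝ | a ≤ |x|}, x ^ m * Real.exp (-x ^ 2)

/-- The `n × n` Hankel determinant generated by the gapped Gaussian weight. -/
noncomputable def gaussHankel (n : ℕ) (a : ℝ) : ℝ :=
  Matrix.det (Matrix.of fun i j : Fin n => gaussMoment a ((i : ℕ) + (j : ℕ)))

section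

open Polynomial Filter Topology

section OrthogonalPolynomials

theorem degree_sub_C_coeff_mul_lt {R : Type*} [Ring R] {P q : R[X]} (hP : P.Monic)
    (hq : q.natDegree ≤ P.natDegree) : (q - C (q.coeff P.natDegree) * P).degree < P.natDegree := by
  rw [degree_lt_iff_coeff_zero]
  intro m hm
  obtain rfl | hlt := hm.eq_or_lt
  · simp [hP.coeff_natDegree]
  · simp [coeff_eq_zero_of_natDegree_lt hlt, coeff_eq_zero_of_natDegree_lt (hq.trans_lt hlt)]

theorem apply_C_mul {R : Type*} [CommSemiring R] (L : R[X] →ₗ[R] R) (c : R) (f : R[X]) :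
    L (C c * f) = c * L f := by
  rw [← smul_eq_C_mul, map_smul, smul_eq_mul]

theorem det_hankel_eq_det_gram {R : Type*} [CommRing R] (L : R[X] →ₗ[R] R) {n : ℕ}
    (P : Fin n → R[X]) (hdeg : ∀ i, (P i).natDegree = i) (hP : ∀ i, (P i).Monic) :
    Matrix.det (Matrix.of fun i j : Fin n => L (X ^ ((i : ℕ) + (j : ℕ)))) =
      Matrix.det (Matrix.of fun i j => L (P i * P j)) := by
  set H : Matrix (Fin n) (Fin n) R := Matrix.of fun i j => L (X ^ ((i : ℕ) + (j : ℕ)))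
  set M : Matrix (Fin n) (Fin n) R := Matrix.of fun i j => (P j).coeff i
  have expand (j : Fin n) : P j = ∑ i : Fin n, C (M i j) * X ^ (i : ℕ) := by
    simpa [M, Fin.sum_univ_eq_sum_range (fun i => C ((P j).coeff i) * X ^ i)] using
      as_sum_range_C_mul_X_pow' (P j) ((hdeg j).trans_lt j.2)
  have gram : (Matrix.of fun i j => L (P i * P j)) = M.transpose * H * M := by
    ext i j
    simp only [Matrix.of_apply, Matrix.mul_apply, Matrix.transpose_apply, Finset.sum_mul]
    rw [expand i, expand j, Finset.sum_mul_sum, map_sum]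
    simp only [map_sum]
    rw [Finset.sum_comm]
    refine Finset.sum_congr rfl fun l _ => Finset.sum_congr rfl fun k _ => ?_
    rw [mul_mul_mul_comm, ← C_mul, apply_C_mul, ← pow_add]
    simp only [H, Matrix.of_apply]
    ring
  rw [gram, Matrix.det_mul, Matrix.det_mul, Matrix.det_transpose,
    Matrix.det_matrixOfPolynomials P hdeg hP, one_mul, mul_one]

variable {K : Type*} [Field K]

/-- The monic orthogonal polynomials `P_k` of a linear functional `L` on polynomials, given by the
Stieltjes recurrence `P_{k+2} = (X - α_{k+1}) P_{k+1} - β_{k+1} P_k`. -/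
noncomputable def orthoPoly (L : K[X] →ₗ[K] K) : ℕ → K[X]
  | 0 => 1
  | 1 => X - C (L X / L 1)
  | k + 2 =>
    (X - C (L (X * orthoPoly L (k + 1) ^ 2) / L (orthoPoly L (k + 1) ^ 2))) * orthoPoly L (k + 1) -
      C (L (orthoPoly L (k + 1) ^ 2) / L (orthoPoly L k ^ 2)) * orthoPoly L k

/-- The squared norms `h_k = L(P_k²)` of the monic orthogonal polynomials. -/
noncomputable def orthoNorm (L : K[X] →ₗ[K] K) (k : ℕ) : K := L (orthoPoly L k ^ 2)

/-- A functional is quasi-definite if none of the norms `h_k` vanishes; this is what makes the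
polynomials `orthoPoly L k` orthogonal. -/
def IsQuasiDefinite (L : K[X] →ₗ[K] K) : Prop := ∀ k, orthoNorm L k ≠ 0

variable (L : K[X] →ₗ[K] K)

theorem orthoPoly_zero : orthoPoly L 0 = 1 := by rw [orthoPoly]

theorem orthoNorm_zero : orthoNorm L 0 = L 1 := by rw [orthoNorm, orthoPoly_zero, one_pow]

theorem orthoPoly_one : orthoPoly L 1 = X - C (L X / L 1) := by rw [orthoPoly]

theorem orthoPoly_succ_succ (k : ℕ) : orthoPoly L (k + 2) =
    (X - C (L (X * orthoPoly L (k + 1) ^ 2) / orthoNorm L (k + 1))) * orthoPoly L (k + 1) -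
      C (orthoNorm L (k + 1) / orthoNorm L k) * orthoPoly L k := by
  rw [orthoPoly, orthoNorm, orthoNorm]

theorem orthoPoly_monic_and_natDegree (k : ℕ) :
    (orthoPoly L k).Monic ∧ (orthoPoly L k).natDegree = k := by
  induction k using Nat.twoStepInduction with
  | zero => simp [orthoPoly_zero]
  | one => simp [orthoPoly_one, monic_X_sub_C]
  | more k ih₀ ih₁ =>
    rw [orthoPoly_succ_succ]
    generalize L (X * orthoPoly L (k + 1) ^ 2) / orthoNorm L (k + 1) = α
    generalize orthoNorm L (k + 1) / orthoNorm L k = β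
    have monic : ((X - C α) * orthoPoly L (k + 1)).Monic := (monic_X_sub_C α).mul ih₁.1
    have natDegree : ((X - C α) * orthoPoly L (k + 1)).natDegree = k + 2 := by
      rw [(monic_X_sub_C α).natDegree_mul ih₁.1, natDegree_X_sub_C, ih₁.2]
      ring
    have lower : (C β * orthoPoly L k).natDegree < ((X - C α) * orthoPoly L (k + 1)).natDegree := by
      have := natDegree_C_mul_le β (orthoPoly L k)
      omega
    exact ⟨monic.sub_of_left (degree_lt_degree lower),
      (natDegree_sub_eq_left_of_natDegree_lt lower).trans natDegree⟩

theorem orthoPoly_monic (k : ℕ) : (orthoPoly L k).Monic := (orthoPoly_monic_and_natDegree L k).1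

theorem natDegree_orthoPoly (k : ℕ) : (orthoPoly L k).natDegree = k :=
  (orthoPoly_monic_and_natDegree L k).2

theorem degree_orthoPoly (k : ℕ) : (orthoPoly L k).degree = k := by
  rw [degree_eq_natDegree (orthoPoly_monic L k).ne_zero, natDegree_orthoPoly]

theorem coeff_orthoPoly_self (k : ℕ) : (orthoPoly L k).coeff k = 1 := by
  simpa [natDegree_orthoPoly] using (orthoPoly_monic L k).coeff_natDegree

variable {L}

theorem apply_mul_orthoPoly_of_orthogonal {k : ℕ}
    (horth : ∀ q : K[X], q.degree < k → L (q * orthoPoly L k) = 0) {q : K[X]}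
    (hq : q.natDegree ≤ k) : L (q * orthoPoly L k) = q.coeff k * orthoNorm L k := by
  rw [← natDegree_orthoPoly L k] at hq
  have h := degree_sub_C_coeff_mul_lt (orthoPoly_monic L k) hq
  rw [natDegree_orthoPoly] at h
  simpa [sub_mul, mul_assoc, apply_C_mul, ← sq, sub_eq_zero, orthoNorm] using horth _ h

variable (L) in
theorem apply_mul_orthoPoly_succ_succ (q : K[X]) (k : ℕ) :
    L (q * orthoPoly L (k + 2)) = L (X * q * orthoPoly L (k + 1)) -
      L (X * orthoPoly L (k + 1) ^ 2) / orthoNorm L (k + 1) * L (q * orthoPoly L (k + 1)) -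
      orthoNorm L (k + 1) / orthoNorm L k * L (q * orthoPoly L k) := by
  rw [orthoPoly_succ_succ, ← apply_C_mul, ← apply_C_mul, ← map_sub, ← map_sub]
  ring_nf

namespace IsQuasiDefinite

theorem apply_mul_orthoPoly_eq_zero (hL : IsQuasiDefinite L) (k : ℕ) :
    ∀ q : K[X], q.degree < k → L (q * orthoPoly L k) = 0 := by
  induction k using Nat.twoStepInduction with
  | zero => intro q hq; simp_all
  | one =>
    intro q hq
    have h₀ : L 1 ≠ 0 := by simpa [orthoNorm_zero] using hL 0
    rw [eq_C_of_degree_le_zero (Order.lt_succ_iff.mp hq), orthoPoly_one, apply_C_mul, map_sub,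
      ← mul_one (C (L X / L 1)), apply_C_mul, div_mul_cancel₀ _ h₀, sub_self, mul_zero]
  | more k ih₀ ih₁ =>
    have lower (r : K[X]) (hr : r.degree < ↑(k + 1)) : L (r * orthoPoly L (k + 2)) = 0 := by
      have hr' : r.natDegree ≤ k := natDegree_le_iff_degree_le.mpr (Order.lt_succ_iff.mp hr)
      have hXr : (X * r).natDegree ≤ k + 1 :=
        (natDegree_mul_le_of_le natDegree_X_le hr').trans (by lia)
      rw [apply_mul_orthoPoly_succ_succ, ih₁ r hr, apply_mul_orthoPoly_of_orthogonal ih₁ hXr,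
        coeff_X_mul, apply_mul_orthoPoly_of_orthogonal ih₀ hr']
      field_simp [hL k]
      ring
    have diag : L (orthoPoly L (k + 1) * orthoPoly L (k + 2)) = 0 := by
      have hlt : (orthoPoly L k).degree < ↑(k + 1) := by
        rw [degree_orthoPoly]
        exact_mod_cast k.lt_succ_self
      rw [apply_mul_orthoPoly_succ_succ, mul_comm _ (orthoPoly L k), ih₁ _ hlt, mul_assoc, ← sq,
        ← orthoNorm, div_mul_cancel₀ _ (hL (k + 1)), sub_self, mul_zero, sub_zero]
    intro q hq
    have hq' : q.natDegree ≤ (orthoPoly L (k + 1)).natDegree := by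
      rw [natDegree_orthoPoly]
      exact natDegree_le_iff_degree_le.mpr (Order.lt_succ_iff.mp hq)
    have h := lower _ (by simpa [natDegree_orthoPoly] using
      degree_sub_C_coeff_mul_lt (orthoPoly_monic L (k + 1)) hq')
    simpa [sub_mul, mul_assoc, apply_C_mul, diag] using h

theorem apply_mul_orthoPoly (hL : IsQuasiDefinite L) {k : ℕ} {q : K[X]} (hq : q.natDegree ≤ k) :
    L (q * orthoPoly L k) = q.coeff k * orthoNorm L k :=
  apply_mul_orthoPoly_of_orthogonal (hL.apply_mul_orthoPoly_eq_zero k) hq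

theorem apply_orthoPoly_mul_orthoPoly (hL : IsQuasiDefinite L) {i j : ℕ} (hij : i ≠ j) :
    L (orthoPoly L i * orthoPoly L j) = 0 := by
  wlog h : i < j generalizing i j
  · rw [mul_comm]
    exact this hij.symm (by lia)
  · exact hL.apply_mul_orthoPoly_eq_zero j _ (by rw [degree_orthoPoly]; exact_mod_cast h)

theorem det_hankel (hL : IsQuasiDefinite L) (n : ℕ) :
    Matrix.det (Matrix.of fun i j : Fin n => L (X ^ ((i : ℕ) + (j : ℕ)))) =
      ∏ k ∈ Finset.range n, orthoNorm L k := by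
  have gram : (Matrix.of fun i j : Fin n => L (orthoPoly L i * orthoPoly L j)) =
      Matrix.diagonal fun k : Fin n => orthoNorm L k := by
    ext i j
    obtain rfl | hij := eq_or_ne i j
    · simp [orthoNorm, sq]
    · simp [hij, hL.apply_orthoPoly_mul_orthoPoly (Fin.val_ne_of_ne hij)]
  rw [det_hankel_eq_det_gram L (fun i : Fin n => orthoPoly L i) (fun i => natDegree_orthoPoly L i)
    fun i => orthoPoly_monic L i, gram, Matrix.det_diagonal, Finset.prod_range]

end IsQuasiDefinite

theorem apply_eq_zero_of_comp_neg_X_eq_neg [NeZero (2 : K)]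
    (heven : ∀ f : K[X], L (f.comp (-X)) = L f) {f : K[X]} (hf : f.comp (-X) = -f) : L f = 0 := by
  have h := heven f
  rw [hf, map_neg, neg_eq_iff_add_eq_zero, ← two_mul] at h
  exact (mul_eq_zero.mp h).resolve_left two_ne_zero

theorem apply_X_mul_sq_eq_zero [NeZero (2 : K)] (heven : ∀ f : K[X], L (f.comp (-X)) = L f)
    {P : K[X]} {k : ℕ} (hP : P.comp (-X) = (-1) ^ k * P) : L (X * P ^ 2) = 0 := by
  refine apply_eq_zero_of_comp_neg_X_eq_neg heven ?_
  rw [mul_comp, pow_comp, hP, mul_pow, ← pow_mul, pow_mul', neg_one_sq, one_pow, X_comp]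
  ring

theorem orthoPoly_comp_neg_X [NeZero (2 : K)] (heven : ∀ f : K[X], L (f.comp (-X)) = L f)
    (k : ℕ) : (orthoPoly L k).comp (-X) = (-1) ^ k * orthoPoly L k := by
  induction k using Nat.twoStepInduction with
  | zero => simp [orthoPoly_zero]
  | one => simp [orthoPoly_one, apply_eq_zero_of_comp_neg_X_eq_neg heven X_comp]
  | more k ih₀ ih₁ =>
    rw [orthoPoly_succ_succ, apply_X_mul_sq_eq_zero heven ih₁]
    simp only [zero_div, C_0, sub_zero, sub_comp, mul_comp, X_comp, C_comp, ih₀, ih₁]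
    ring

end OrthogonalPolynomials

section GaussianGap

variable {K : Type*} [Field K]

/-- A quasi-definite even functional obeying the integration by parts formula of the weight
`e^{-x²}` with jumps of size `E` at `±a`, such as `e^{-x²} 1_{|x| ≥ a}` with `E = e^{-a²}`. -/
structure IsGaussianGap (L : K[X] →ₗ[K] K) (a E : K) : Prop where
  even : ∀ f : K[X], L (f.comp (-X)) = L f
  isQuasiDefinite : IsQuasiDefinite L
  two_mul_apply_X_mul : ∀ f : K[X],
    2 * L (X * f) = L (derivative f) + E * (f.eval a - f.eval (-a))

section Endpoint

variable (L : K[X] →ₗ[K] K) (a E : K) (k : ℕ)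

/-- The endpoint value `q_k = β_k P_{k-1}(a)`, written as `a P_k(a) - P_{k+1}(a)` so that it makes
sense, and vanishes for even `L`, at `k = 0`. -/
noncomputable def endpointPrev : K := a * (orthoPoly L k).eval a - (orthoPoly L (k + 1)).eval a

/-- The ladder coefficient `R_k = E P_k(a)² / h_k`. -/
noncomputable def ladderDiag : K := E * (orthoPoly L k).eval a ^ 2 / orthoNorm L k

/-- The ladder coefficient `r_k = E P_k(a) q_k / h_k = E P_k(a) P_{k-1}(a) / h_{k-1}`. -/
noncomputable def ladderCross : K :=
  E * ((orthoPoly L k).eval a * endpointPrev L a k) / orthoNorm L k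

/-- The ladder coefficient `V_k = E q_k² / h_k = β_k R_{k-1}`. -/
noncomputable def ladderPrev : K := E * endpointPrev L a k ^ 2 / orthoNorm L k

theorem eval_orthoPoly_succ :
    (orthoPoly L (k + 1)).eval a = a * (orthoPoly L k).eval a - endpointPrev L a k := by
  rw [endpointPrev, sub_sub_cancel]

theorem ladderDiag_mul_ladderPrev :
    ladderDiag L a E k * ladderPrev L a E k = ladderCross L a E k ^ 2 := by
  rw [ladderDiag, ladderPrev, ladderCross]
  ring

theorem ladderDiag_zero : ladderDiag L a E 0 = E / L 1 := by
  simp [ladderDiag, orthoPoly_zero, orthoNorm_zero]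

end Endpoint

namespace IsGaussianGap

variable [NeZero (2 : K)] {L : K[X] →ₗ[K] K} {a E : K} (hL : IsGaussianGap L a E)
include hL

theorem endpointPrev_zero : endpointPrev L a 0 = 0 := by
  simp [endpointPrev, orthoPoly_zero, orthoPoly_one,
    apply_eq_zero_of_comp_neg_X_eq_neg hL.even X_comp]

theorem ladderCross_zero : ladderCross L a E 0 = 0 := by
  simp [ladderCross, hL.endpointPrev_zero]

theorem ladderPrev_zero : ladderPrev L a E 0 = 0 := by
  simp [ladderPrev, hL.endpointPrev_zero]

theorem endpointPrev_succ (k : ℕ) : endpointPrev L a (k + 1) =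
    orthoNorm L (k + 1) / orthoNorm L k * (orthoPoly L k).eval a := by
  have hα := apply_X_mul_sq_eq_zero hL.even (orthoPoly_comp_neg_X hL.even (k + 1))
  simp [endpointPrev, orthoPoly_succ_succ, hα]

theorem ladderCross_succ_mul_orthoNorm (k : ℕ) : ladderCross L a E (k + 1) * orthoNorm L k =
    E * ((orthoPoly L (k + 1)).eval a * (orthoPoly L k).eval a) := by
  have h₀ := hL.isQuasiDefinite k
  have h₁ := hL.isQuasiDefinite (k + 1)
  rw [ladderCross, hL.endpointPrev_succ]
  field_simp

theorem ladderCross_succ (k : ℕ) :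
    ladderCross L a E (k + 1) = a * ladderDiag L a E k - ladderCross L a E k := by
  have h₀ := hL.isQuasiDefinite k
  rw [← mul_left_inj' h₀, hL.ladderCross_succ_mul_orthoNorm, eval_orthoPoly_succ, ladderDiag,
    ladderCross]
  field_simp

/-- Integration by parts applied to `P_k P_{k+1}`. -/
theorem two_mul_orthoNorm_succ (k : ℕ) :
    2 * orthoNorm L (k + 1) = (2 * ladderCross L a E (k + 1) + (k + 1)) * orthoNorm L k := by
  have parts := hL.two_mul_apply_X_mul (orthoPoly L k * orthoPoly L (k + 1))
  have norm_succ : L (X * (orthoPoly L k * orthoPoly L (k + 1))) = orthoNorm L (k + 1) := by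
    rw [← mul_assoc, hL.isQuasiDefinite.apply_mul_orthoPoly, coeff_X_mul, coeff_orthoPoly_self,
      one_mul]
    rw [natDegree_X_mul (orthoPoly_monic L k).ne_zero, natDegree_orthoPoly]
  have deriv_left : L (derivative (orthoPoly L k) * orthoPoly L (k + 1)) = 0 :=
    hL.isQuasiDefinite.apply_mul_orthoPoly_eq_zero (k + 1) _ <| degree_derivative_le.trans_lt <| by
      rw [degree_orthoPoly]
      exact_mod_cast k.lt_succ_self
  have deriv_right : L (orthoPoly L k * derivative (orthoPoly L (k + 1))) =
      (k + 1) * orthoNorm L k := by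
    rw [mul_comm, hL.isQuasiDefinite.apply_mul_orthoPoly, coeff_derivative, coeff_orthoPoly_self,
      one_mul]
    simpa [natDegree_orthoPoly] using natDegree_derivative_le (orthoPoly L (k + 1))
  have odd : (orthoPoly L k * orthoPoly L (k + 1)).eval (-a) =
      -((orthoPoly L k).eval a * (orthoPoly L (k + 1)).eval a) := by
    have h := congrArg (eval a) (congrArg₂ (· * ·) (orthoPoly_comp_neg_X hL.even k)
      (orthoPoly_comp_neg_X hL.even (k + 1)))
    rw [mul_mul_mul_comm, ← pow_add, Odd.neg_one_pow ⟨k, by ring⟩] at h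
    simpa [eval_comp] using h
  rw [norm_succ, derivative_mul, map_add, deriv_left, deriv_right, odd, eval_mul] at parts
  linear_combination parts - 2 * hL.ladderCross_succ_mul_orthoNorm k

theorem two_mul_ladderCross_succ_add_ne_zero (k : ℕ) :
    2 * ladderCross L a E (k + 1) + (k + 1) ≠ 0 := by
  refine left_ne_zero_of_mul (b := orthoNorm L k) ?_
  rw [← hL.two_mul_orthoNorm_succ]
  exact mul_ne_zero two_ne_zero (hL.isQuasiDefinite (k + 1))

theorem two_mul_ladderPrev_succ (k : ℕ) : 2 * ladderPrev L a E (k + 1) =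
    (2 * ladderCross L a E (k + 1) + (k + 1)) * ladderDiag L a E k := by
  have h₀ := hL.isQuasiDefinite k
  rw [ladderPrev, hL.endpointPrev_succ, ladderDiag, ← mul_left_inj' h₀]
  field_simp [hL.isQuasiDefinite (k + 1)]
  linear_combination E * (orthoPoly L k).eval a ^ 2 * hL.two_mul_orthoNorm_succ k

theorem mul_ladderDiag_succ (k : ℕ) :
    (2 * ladderCross L a E (k + 1) + (k + 1)) * ladderDiag L a E (k + 1) =
      2 * (ladderPrev L a E k + a ^ 2 * ladderDiag L a E k - 2 * a * ladderCross L a E k) := by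
  have h₀ := hL.isQuasiDefinite k
  rw [eq_div_of_mul_eq h₀ (hL.two_mul_orthoNorm_succ k).symm, ladderDiag, eval_orthoPoly_succ,
    ladderPrev, ladderDiag, ladderCross]
  field_simp [hL.isQuasiDefinite (k + 1)]
  ring

end IsGaussianGap

end GaussianGap

section LadderSystem

variable {𝕜 : Type*} [NontriviallyNormedField 𝕜]

/-- The differential system in the endpoint `a` for the ladder coefficients `R_κ`, `r_κ`, `V_κ`,
with its algebraic constraint. -/
structure LadderSystemAt (κ : 𝕜) (R r V : 𝕜 → 𝕜) (a : 𝕜) : Prop where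
  diag_mul_prev : R a * V a = r a ^ 2
  hasDerivAt_diag : HasDerivAt R (-2 * a * R a + 2 * R a ^ 2 + 4 * r a - 4 * r a * R a / a) a
  hasDerivAt_cross : HasDerivAt r (2 * V a - (2 * r a + κ) * R a) a
  hasDerivAt_prev : HasDerivAt V
    (2 * a * V a - 2 * r a ^ 2 - 2 * (2 * r a + κ) * r a + 4 * r a * V a / a) a

namespace LadderSystemAt

variable {κ a : 𝕜} {R r V R' r' V' : 𝕜 → 𝕜}

theorem hasDerivAt_cross_succ (h : LadderSystemAt κ R r V a) (ha : a ≠ 0)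
    (hr : ∀ᶠ x in 𝓝 a, r' x = x * R x - r x) :
    HasDerivAt r'
      ((2 * r' a + (κ + 1)) * R a - 2 * (V a + a ^ 2 * R a - 2 * a * r a)) a := by
  refine ((((hasDerivAt_id a).mul h.hasDerivAt_diag).sub
    h.hasDerivAt_cross).congr_of_eventuallyEq hr).congr_deriv ?_
  rw [hr.self_of_nhds]
  simp only [id]
  field_simp
  ring

theorem hasDerivAt_prev_succ [NeZero (2 : 𝕜)] (h : LadderSystemAt κ R r V a) (ha : a ≠ 0)
    (hr : ∀ᶠ x in 𝓝 a, r' x = x * R x - r x)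
    (hV : ∀ᶠ x in 𝓝 a, 2 * V' x = (2 * r' x + (κ + 1)) * R x) :
    HasDerivAt V' (2 * a * V' a - 2 * r' a ^ 2 - 2 * (2 * r' a + (κ + 1)) * r' a +
      4 * r' a * V' a / a) a := by
  have hc := ((h.hasDerivAt_cross_succ ha hr).const_mul 2).add_const (κ + 1)
  refine (((hc.mul h.hasDerivAt_diag).div_const 2).congr_of_eventuallyEq (hV.mono fun x hx =>
    eq_div_of_mul_eq two_ne_zero (by rw [mul_comm, hx]; rfl))).congr_deriv ?_
  have hV' := eq_div_of_mul_eq two_ne_zero ((mul_comm _ _).trans hV.self_of_nhds)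
  rw [hV', hr.self_of_nhds]
  field_simp
  linear_combination (-4 * a) * h.diag_mul_prev

/-- For the ladder coefficients the differentiated quantity is `E P_{k+1}(a)² / h_k`. -/
theorem hasDerivAt_prev_add_sq_mul_diag_sub (h : LadderSystemAt κ R r V a) (ha : a ≠ 0)
    {ρ : 𝕜} (hρ : ρ = a * R a - r a) :
    HasDerivAt (fun x => V x + x ^ 2 * R x - 2 * x * r x)
      ((2 * R a - 2 * a - 4 * ρ / a) * (V a + a ^ 2 * R a - 2 * a * r a) +
        2 * ρ * (2 * ρ + (κ + 1))) a := by
  refine ((h.hasDerivAt_prev.add (((hasDerivAt_id a).pow 2).mul h.hasDerivAt_diag)).sub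
    (((hasDerivAt_id a).const_mul 2).mul h.hasDerivAt_cross)).congr_deriv ?_
  rw [hρ]
  simp only [id, Pi.pow_apply, Nat.cast_ofNat]
  field_simp
  linear_combination (2 * a) * h.diag_mul_prev

theorem hasDerivAt_diag_succ (h : LadderSystemAt κ R r V a) (ha : a ≠ 0)
    (hc : 2 * r' a + (κ + 1) ≠ 0) (hr : ∀ᶠ x in 𝓝 a, r' x = x * R x - r x)
    (hR : ∀ᶠ x in 𝓝 a,
      (2 * r' x + (κ + 1)) * R' x = 2 * (V x + x ^ 2 * R x - 2 * x * r x)) :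
    HasDerivAt R' (-2 * a * R' a + 2 * R' a ^ 2 + 4 * r' a - 4 * r' a * R' a / a) a := by
  have dc : HasDerivAt (fun x => 2 * r' x + (κ + 1)) _ a :=
    ((h.hasDerivAt_cross_succ ha hr).const_mul 2).add_const (κ + 1)
  have hR' : R' =ᶠ[𝓝 a] fun x =>
      2 * (V x + x ^ 2 * R x - 2 * x * r x) / (2 * r' x + (κ + 1)) := by
    filter_upwards [hR, dc.continuousAt.eventually_ne hc] with x hx hcx
    rw [← hx, mul_div_cancel_left₀ _ hcx]
  refine ((((h.hasDerivAt_prev_add_sq_mul_diag_sub ha hr.self_of_nhds).const_mul 2).div dc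
    hc).congr_of_eventuallyEq hR').congr_deriv ?_
  rw [hR'.self_of_nhds]
  field_simp
  ring

theorem succ [NeZero (2 : 𝕜)] (h : LadderSystemAt κ R r V a) (ha : a ≠ 0)
    (hc : 2 * r' a + (κ + 1) ≠ 0)
    (hr : ∀ᶠ x in 𝓝 a, r' x = x * R x - r x)
    (hV : ∀ᶠ x in 𝓝 a, 2 * V' x = (2 * r' x + (κ + 1)) * R x)
    (hR : ∀ᶠ x in 𝓝 a,
      (2 * r' x + (κ + 1)) * R' x = 2 * (V x + x ^ 2 * R x - 2 * x * r x)) :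
    LadderSystemAt (κ + 1) R' r' V' a where
  diag_mul_prev := by
    rw [← mul_right_inj' (mul_ne_zero two_ne_zero hc), hr.self_of_nhds]
    have hV := hV.self_of_nhds
    have hR := hR.self_of_nhds
    rw [hr.self_of_nhds] at hV hR
    linear_combination (2 * V' a) * hR + 2 * (V a + a ^ 2 * R a - 2 * a * r a) * hV +
      2 * (2 * (a * R a - r a) + (κ + 1)) * h.diag_mul_prev
  hasDerivAt_diag := h.hasDerivAt_diag_succ ha hc hr hR
  hasDerivAt_cross := (h.hasDerivAt_cross_succ ha hr).congr_deriv <| by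
    rw [hV.self_of_nhds, hR.self_of_nhds]
  hasDerivAt_prev := h.hasDerivAt_prev_succ ha hr hV

end LadderSystemAt

end LadderSystem

section GaussianGapFamily

variable {𝕜 : Type*} [NontriviallyNormedField 𝕜]

/-- Functionals `L x` with gap `(-x, x)` for `x` near `a`, whose jump and total mass vary like those
of the weight `e^{-t²} 1_{|t| ≥ x}`. -/
structure IsGaussianGapFamilyAt (L : 𝕜 → 𝕜[X] →ₗ[𝕜] 𝕜) (E : 𝕜 → 𝕜) (a : 𝕜) : Prop where
  eventually_isGaussianGap : ∀ᶠ x in 𝓝 a, IsGaussianGap (L x) x (E x)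
  hasDerivAt_jump : HasDerivAt E (-2 * a * E a) a
  hasDerivAt_mass : HasDerivAt (fun x => L x 1) (-2 * E a) a

namespace IsGaussianGapFamilyAt

variable {L : 𝕜 → 𝕜[X] →ₗ[𝕜] 𝕜} {E : 𝕜 → 𝕜} {a : 𝕜} (hL : IsGaussianGapFamilyAt L E a)
include hL

theorem isGaussianGap : IsGaussianGap (L a) a (E a) := hL.eventually_isGaussianGap.self_of_nhds

variable [NeZero (2 : 𝕜)]

theorem ladderSystemAt_zero : LadderSystemAt 0 (fun x => ladderDiag (L x) x (E x) 0)
    (fun x => ladderCross (L x) x (E x) 0) (fun x => ladderPrev (L x) x (E x) 0) a := by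
  have hmass : L a 1 ≠ 0 := by
    simpa [orthoNorm_zero] using hL.isGaussianGap.isQuasiDefinite 0
  have cross : (fun x => ladderCross (L x) x (E x) 0) =ᶠ[𝓝 a] fun _ => 0 :=
    hL.eventually_isGaussianGap.mono fun _ hx => hx.ladderCross_zero
  have prev : (fun x => ladderPrev (L x) x (E x) 0) =ᶠ[𝓝 a] fun _ => 0 :=
    hL.eventually_isGaussianGap.mono fun _ hx => hx.ladderPrev_zero
  refine ⟨ladderDiag_mul_ladderPrev .., ?_,
    ((hasDerivAt_const a 0).congr_of_eventuallyEq cross).congr_deriv ?_,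
    ((hasDerivAt_const a 0).congr_of_eventuallyEq prev).congr_deriv ?_⟩
  · simp only [ladderDiag_zero, hL.isGaussianGap.ladderCross_zero]
    refine (hL.hasDerivAt_jump.div hL.hasDerivAt_mass hmass).congr_deriv ?_
    field_simp
    ring
  all_goals simp [cross.self_of_nhds, prev.self_of_nhds]

theorem ladderSystemAt (ha : a ≠ 0) (k : ℕ) :
    LadderSystemAt (k : 𝕜) (fun x => ladderDiag (L x) x (E x) k)
      (fun x => ladderCross (L x) x (E x) k) (fun x => ladderPrev (L x) x (E x) k) a := by
  induction k with
  | zero => simpa using hL.ladderSystemAt_zero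
  | succ k ih =>
    rw [Nat.cast_succ]
    have gap := hL.eventually_isGaussianGap
    exact ih.succ ha (hL.isGaussianGap.two_mul_ladderCross_succ_add_ne_zero k)
      (gap.mono fun _ hx => hx.ladderCross_succ k)
      (gap.mono fun _ hx => hx.two_mul_ladderPrev_succ k)
      (gap.mono fun _ hx => hx.mul_ladderDiag_succ k)

theorem hasDerivAt_orthoNorm (ha : a ≠ 0) (k : ℕ) : HasDerivAt (fun x => orthoNorm (L x) k)
    (-2 * ladderDiag (L a) a (E a) k * orthoNorm (L a) k) a := by
  induction k with
  | zero =>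
    have hmass := hL.isGaussianGap.isQuasiDefinite 0
    simp only [orthoNorm_zero, ladderDiag_zero] at hmass ⊢
    exact hL.hasDerivAt_mass.congr_deriv (by rw [mul_assoc, div_mul_cancel₀ _ hmass])
  | succ k ih =>
    have norm_succ : (fun x => orthoNorm (L x) (k + 1)) =ᶠ[𝓝 a] fun x =>
        (2 * ladderCross (L x) x (E x) (k + 1) + (k + 1)) * orthoNorm (L x) k / 2 :=
      hL.eventually_isGaussianGap.mono fun x hx =>
        eq_div_of_mul_eq two_ne_zero ((mul_comm _ _).trans (hx.two_mul_orthoNorm_succ k))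
    have system := hL.ladderSystemAt ha (k + 1)
    refine (((((system.hasDerivAt_cross.const_mul 2).add_const _).mul ih).div_const
      2).congr_of_eventuallyEq norm_succ).congr_deriv ?_
    rw [hL.isGaussianGap.two_mul_ladderPrev_succ k]
    push_cast
    field_simp
    linear_combination ladderDiag (L a) a (E a) (k + 1) * hL.isGaussianGap.two_mul_orthoNorm_succ k

end IsGaussianGapFamilyAt

end GaussianGapFamily

section SigmaForm

/-- The value `σ_n = -2a (R_0 + ⋯ + R_{n-1})` expressed through `R_n`, `r_n` and `V_n`; see
`IsGaussianGap.neg_two_mul_sum_ladderDiag`. -/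
def sigmaForm {K : Type*} [CommRing K] (κ a R r V : K) : K :=
  4 * r ^ 2 + 4 * a ^ 2 * r - 4 * a * V - 2 * a * (2 * r + κ) * R

theorem IsGaussianGap.neg_two_mul_sum_ladderDiag {K : Type*} [Field K] [NeZero (2 : K)]
    {L : K[X] →ₗ[K] K} {a E : K} (hL : IsGaussianGap L a E) (n : ℕ) :
    -2 * a * ∑ k ∈ Finset.range n, ladderDiag L a E k =
      sigmaForm (n : K) a (ladderDiag L a E n) (ladderCross L a E n) (ladderPrev L a E n) := by
  induction n with
  | zero => simp [sigmaForm, hL.ladderCross_zero, hL.ladderPrev_zero]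
  | succ n ih =>
    have prev := hL.two_mul_ladderPrev_succ n
    have diag := hL.mul_ladderDiag_succ n
    rw [hL.ladderCross_succ] at prev diag
    rw [Finset.sum_range_succ, mul_add, ih, sigmaForm, sigmaForm, hL.ladderCross_succ]
    push_cast
    linear_combination 2 * a * prev + 2 * a * diag

namespace LadderSystemAt

variable {𝕜 : Type*} [NontriviallyNormedField 𝕜] {κ a : 𝕜} {R r V : 𝕜 → 𝕜}

theorem hasDerivAt_sigmaForm (h : LadderSystemAt κ R r V a) (ha : a ≠ 0) :
    HasDerivAt (fun x => sigmaForm κ x (R x) (r x) (V x))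
      (8 * a * r a - 4 * V a - 2 * (2 * r a + κ) * R a) a := by
  have hx := hasDerivAt_id a
  refine (((((h.hasDerivAt_cross.pow 2).const_mul 4).add
    (((hx.pow 2).const_mul 4).mul h.hasDerivAt_cross)).sub
    ((hx.const_mul 4).mul h.hasDerivAt_prev)).sub
    (((hx.const_mul 2).mul ((h.hasDerivAt_cross.const_mul 2).add_const κ)).mul
      h.hasDerivAt_diag)).congr_deriv ?_
  simp only [id, Pi.pow_apply, Pi.mul_apply, Nat.cast_ofNat]
  field_simp
  linear_combination (-8 * a) * h.diag_mul_prev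

theorem hasDerivAt_deriv_sigmaForm (h : LadderSystemAt κ R r V a) (ha : a ≠ 0) :
    HasDerivAt (fun x => 8 * x * r x - 4 * V x - 2 * (2 * r x + κ) * R x)
      (8 * r a - 4 * (2 * r a - a ^ 2) * (2 * V a - (2 * r a + κ) * R a) / a) a := by
  refine (((((hasDerivAt_id a).const_mul 8).mul h.hasDerivAt_cross).sub
    (h.hasDerivAt_prev.const_mul 4)).sub
    ((((h.hasDerivAt_cross.const_mul 2).add_const κ).const_mul 2).mul
      h.hasDerivAt_diag)).congr_deriv ?_
  simp only [id]
  field_simp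
  linear_combination (-8 * a) * h.diag_mul_prev

end LadderSystemAt

section Elimination

variable {A : Type*} [CommRing A] {n a R r V s s₁ s₂ w : A}

/-- The relation between `w = 2 r_n - a²`, `σ_n'` and `σ_n''` left after eliminating `R_n` and `V_n`
with `R_n V_n = r_n²`. -/
def sigmaResolvent (n a s₁ s₂ w : A) : A :=
  4 * w ^ 2 * (4 * a * (w + a ^ 2) - s₁) ^ 2 - (4 * a * (w + a ^ 2) - a * s₂) ^ 2 -
    32 * w ^ 2 * (w + a ^ 2 + n) * (w + a ^ 2) ^ 2

theorem sigmaResolvent_eq_zero (hRV : R * V = r ^ 2)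
    (hs₁ : s₁ = 8 * a * r - 4 * V - 2 * (2 * r + n) * R)
    (hs₂ : a * s₂ = 8 * a * r - 4 * (2 * r - a ^ 2) * (2 * V - (2 * r + n) * R)) :
    sigmaResolvent n a s₁ s₂ (2 * r - a ^ 2) = 0 := by
  rw [sigmaResolvent, hs₂, hs₁]
  linear_combination (128 * (2 * r - a ^ 2) ^ 2 * (2 * r + n)) * hRV

/-- Only `w²` is a polynomial in `σ, σ'`, so the sign of `w` is removed by multiplying the two
conjugate resolvents. -/
theorem sigma_equation_of_sigmaResolvent_eq_zero (hw : w ^ 2 = s + a ^ 4 - a * s₁)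
    (h : sigmaResolvent n a s₁ s₂ w = 0) :
    16 * (a ^ 2 * s₂ + 4 * (s + 2 * n * a ^ 2) * (a * s₁ - s - a ^ 4) - 4 * a ^ 4) *
        (a ^ 4 * s₂ ^ 2 - 4 * a ^ 2 * s₂ * (a * s₁ - s) +
          4 * (a * s₁ - s - a ^ 4) * (a * s₁ - 2 * s) ^ 2) =
      (a ^ 2 * s₂ ^ 2 + 4 * (s₁ ^ 2 + 8 * n * (a * s₁ - s) - 4 * a ^ 2) * (a * s₁ - s - a ^ 4) -
        16 * a ^ 6) ^ 2 := by
  obtain rfl : s = w ^ 2 - a ^ 4 + a * s₁ := by linear_combination -hw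
  have conj := congrArg (· * sigmaResolvent n a s₁ s₂ (-w)) h
  simp only [sigmaResolvent] at conj
  linear_combination -conj

end Elimination

end SigmaForm

section GapFunctional

theorem integrable_eval_mul_exp_neg_sq (f : ℝ[X]) :
    Integrable fun x : ℝ => f.eval x * Real.exp (-x ^ 2) := by
  induction f using Polynomial.induction_on' with
  | add p q hp hq =>
    simp only [eval_add, add_mul]
    exact hp.add hq
  | monomial m c =>
    simpa [mul_assoc, Real.rpow_natCast] using (integrable_rpow_mul_exp_neg_mul_sq one_pos
      (neg_one_lt_zero.trans_le m.cast_nonneg)).const_mul c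

theorem hasDerivAt_eval_mul_exp_neg_sq (f : ℝ[X]) (x : ℝ) :
    HasDerivAt (fun x : ℝ => f.eval x * Real.exp (-x ^ 2))
      ((derivative f - (2 : ℝ) • (X * f)).eval x * Real.exp (-x ^ 2)) x := by
  refine ((f.hasDerivAt x).mul ((hasDerivAt_id x).pow 2).neg.exp).congr_deriv ?_
  simp
  ring

/-- The functional `f ↦ ∫_{|x| ≥ a} f(x) e^{-x²} dx` on polynomials. -/
noncomputable def gapFunctional (a : ℝ) : ℝ[X] →ₗ[ℝ] ℝ where
  toFun f := ∫ x in {x : ℝ | a ≤ |x|}, f.eval x * Real.exp (-x ^ 2)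
  map_add' f g := by
    simp only [eval_add, add_mul]
    exact integral_add (integrable_eval_mul_exp_neg_sq f).integrableOn
      (integrable_eval_mul_exp_neg_sq g).integrableOn
  map_smul' c f := by
    simp only [eval_smul, smul_eq_mul, mul_assoc, RingHom.id_apply]
    exact integral_const_mul c _

theorem gapFunctional_apply (a : ℝ) (f : ℝ[X]) : gapFunctional a f =
    ∫ x in {x : ℝ | a ≤ |x|}, f.eval x * Real.exp (-x ^ 2) := rfl

theorem gapFunctional_comp_neg_X (a : ℝ) (f : ℝ[X]) :
    gapFunctional a (f.comp (-X)) = gapFunctional a f := by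
  have reflect := (Measure.measurePreserving_neg (volume : Measure ℝ)).setIntegral_preimage_emb
    (MeasurableEquiv.neg ℝ).measurableEmbedding (fun x => f.eval x * Real.exp (-x ^ 2))
    {x | a ≤ |x|}
  simpa only [gapFunctional_apply, eval_comp, eval_neg, eval_X, Set.preimage_ofPred_eq, abs_neg,
    neg_sq] using reflect

theorem gapFunctional_sq_pos (a : ℝ) {f : ℝ[X]} (hf : f ≠ 0) : 0 < gapFunctional a (f ^ 2) := by
  rw [gapFunctional_apply, setIntegral_pos_iff_support_of_nonneg_ae
    (ae_of_all _ fun x => by simp only [eval_pow, Pi.zero_apply]; positivity)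
    (integrable_eval_mul_exp_neg_sq _).integrableOn]
  have off_roots : Set.Ioi |a| \ f.roots.toFinset ⊆
      (Function.support fun x => (f ^ 2).eval x * Real.exp (-x ^ 2)) ∩ {x : ℝ | a ≤ |x|} := by
    rintro x ⟨hx, hroot⟩
    have hfx : f.eval x ≠ 0 := by simpa [hf] using hroot
    exact ⟨by simp [hfx], (le_abs_self a).trans (hx.le.trans (le_abs_self x))⟩
  refine lt_of_lt_of_le ?_ (measure_mono off_roots)
  rw [measure_sdiff_null (Finset.measure_zero _ _), Real.volume_Ioi]
  exact ENNReal.zero_lt_top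

theorem isQuasiDefinite_gapFunctional (a : ℝ) : IsQuasiDefinite (gapFunctional a) :=
  fun k => (gapFunctional_sq_pos a (orthoPoly_monic _ k).ne_zero).ne'

theorem gapFunctional_eq_sub_intervalIntegral {a : ℝ} (ha : 0 ≤ a) (f : ℝ[X]) :
    gapFunctional a f = (∫ x, f.eval x * Real.exp (-x ^ 2)) -
      ∫ x in -a..a, f.eval x * Real.exp (-x ^ 2) := by
  have hset : {x : ℝ | a ≤ |x|} = (Set.Ioo (-a) a)ᶜ := by
    ext x
    simp [← abs_lt]
  rw [gapFunctional_apply, hset,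
    setIntegral_compl measurableSet_Ioo (integrable_eval_mul_exp_neg_sq f),
    intervalIntegral.integral_of_le (neg_le_self ha), integral_Ioc_eq_integral_Ioo]

theorem two_mul_gapFunctional_X_mul {a : ℝ} (ha : 0 ≤ a) (f : ℝ[X]) :
    2 * gapFunctional a (X * f) =
      gapFunctional a (derivative f) + Real.exp (-a ^ 2) * (f.eval a - f.eval (-a)) := by
  have parts := gapFunctional_eq_sub_intervalIntegral ha (derivative f - (2 : ℝ) • (X * f))
  rw [integral_eq_zero_of_hasDerivAt_of_integrable (hasDerivAt_eval_mul_exp_neg_sq f)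
      (integrable_eval_mul_exp_neg_sq _) (integrable_eval_mul_exp_neg_sq f),
    intervalIntegral.integral_eq_sub_of_hasDerivAt
      (fun x _ => hasDerivAt_eval_mul_exp_neg_sq f x)
      (integrable_eval_mul_exp_neg_sq _).intervalIntegrable, map_sub, map_smul, smul_eq_mul,
    neg_sq] at parts
  linear_combination -parts

theorem isGaussianGap_gapFunctional {a : ℝ} (ha : 0 ≤ a) :
    IsGaussianGap (gapFunctional a) a (Real.exp (-a ^ 2)) :=
  ⟨gapFunctional_comp_neg_X a, isQuasiDefinite_gapFunctional a, two_mul_gapFunctional_X_mul ha⟩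

theorem hasDerivAt_gapFunctional {a : ℝ} (ha : 0 < a) (f : ℝ[X]) :
    HasDerivAt (fun x => gapFunctional x f)
      (-(f.eval a + f.eval (-a)) * Real.exp (-a ^ 2)) a := by
  have hcont : Continuous fun x : ℝ => f.eval x * Real.exp (-x ^ 2) := by fun_prop
  have primitive (b : ℝ) := (hcont.integral_hasStrictDerivAt 0 b).hasDerivAt
  have split : (fun x => gapFunctional x f) =ᶠ[𝓝 a] fun x =>
      (∫ t, f.eval t * Real.exp (-t ^ 2)) - ((∫ t in (0 : ℝ)..x, f.eval t * Real.exp (-t ^ 2)) -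
        ∫ t in (0 : ℝ)..-x, f.eval t * Real.exp (-t ^ 2)) := by
    filter_upwards [lt_mem_nhds ha] with x hx
    rw [gapFunctional_eq_sub_intervalIntegral hx.le, intervalIntegral.integral_interval_sub_left
      (hcont.intervalIntegrable _ _) (hcont.intervalIntegrable _ _)]
  refine ((((primitive a).sub ((primitive (-a)).comp a (hasDerivAt_neg a))).const_sub
    _).congr_of_eventuallyEq split).congr_deriv ?_
  rw [neg_sq]
  ring

theorem isGaussianGapFamilyAt_gapFunctional {a : ℝ} (ha : 0 < a) :
    IsGaussianGapFamilyAt gapFunctional (fun x => Real.exp (-x ^ 2)) a where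
  eventually_isGaussianGap :=
    (lt_mem_nhds ha).mono fun _ hx => isGaussianGap_gapFunctional hx.le
  hasDerivAt_jump := by
    simpa [mul_comm, mul_assoc] using ((hasDerivAt_id a).pow 2).neg.exp
  hasDerivAt_mass := by
    refine (hasDerivAt_gapFunctional ha 1).congr_deriv ?_
    simp only [eval_one]
    ring

theorem gaussHankel_eq_prod_orthoNorm (n : ℕ) (a : ℝ) :
    gaussHankel n a = ∏ k ∈ Finset.range n, orthoNorm (gapFunctional a) k := by
  rw [← (isQuasiDefinite_gapFunctional a).det_hankel, gaussHankel]
  simp [gaussMoment, gapFunctional_apply]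

theorem hasDerivAt_log_gaussHankel (n : ℕ) {a : ℝ} (ha : 0 < a) :
    HasDerivAt (fun x => Real.log (gaussHankel n x))
      (-2 * ∑ k ∈ Finset.range n, ladderDiag (gapFunctional a) a (Real.exp (-a ^ 2)) k) a := by
  have hlog : (fun x => Real.log (gaussHankel n x)) = fun x =>
      ∑ k ∈ Finset.range n, Real.log (orthoNorm (gapFunctional x) k) := by
    ext x
    rw [gaussHankel_eq_prod_orthoNorm,
      Real.log_prod fun k _ => isQuasiDefinite_gapFunctional x k]
  rw [hlog, Finset.mul_sum]
  refine HasDerivAt.fun_sum fun k _ => ?_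
  have hk := isQuasiDefinite_gapFunctional a k
  exact (((isGaussianGapFamilyAt_gapFunctional ha).hasDerivAt_orthoNorm ha.ne' k).log
    hk).congr_deriv (mul_div_cancel_right₀ _ hk)

end GapFunctional

end

theorem gue_sigma_ode (n : ℕ) (hn : 1 ≤ n) (σ : ℝ → ℝ)
    (hσ : ∀ a : ℝ, σ a = a * deriv (fun x => Real.log (gaussHankel n x)) a) :
    DifferentiableOn ℝ σ (Set.Ioi 0) ∧ DifferentiableOn ℝ (deriv σ) (Set.Ioi 0) ∧
    ∀ a : ℝ, 0 < a →
      16 * (a ^ 2 * deriv (deriv σ) a +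
            4 * (σ a + 2 * (n : ℝ) * a ^ 2) * (a * deriv σ a - σ a - a ^ 4) - 4 * a ^ 4) *
          (a ^ 4 * (deriv (deriv σ) a) ^ 2 -
            4 * a ^ 2 * deriv (deriv σ) a * (a * deriv σ a - σ a) +
            4 * (a * deriv σ a - σ a - a ^ 4) * (a * deriv σ a - 2 * σ a) ^ 2) =
        (a ^ 2 * (deriv (deriv σ) a) ^ 2 +
          4 * ((deriv σ a) ^ 2 + 8 * (n : ℝ) * (a * deriv σ a - σ a) - 4 * a ^ 2) *
            (a * deriv σ a - σ a - a ^ 4) - 16 * a ^ 6) ^ 2 := by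
  let R x := ladderDiag (gapFunctional x) x (Real.exp (-x ^ 2)) n
  let r x := ladderCross (gapFunctional x) x (Real.exp (-x ^ 2)) n
  let V x := ladderPrev (gapFunctional x) x (Real.exp (-x ^ 2)) n
  have system {x : ℝ} (hx : 0 < x) : LadderSystemAt (n : ℝ) R r V x :=
    (isGaussianGapFamilyAt_gapFunctional hx).ladderSystemAt hx.ne' n
  have σ_eq {x : ℝ} (hx : 0 < x) : σ x = sigmaForm (n : ℝ) x (R x) (r x) (V x) := by
    rw [hσ, (hasDerivAt_log_gaussHankel n hx).deriv,
      ← (isGaussianGap_gapFunctional hx.le).neg_two_mul_sum_ladderDiag n]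
    ring
  have dσ {x : ℝ} (hx : 0 < x) := ((system hx).hasDerivAt_sigmaForm hx.ne').congr_of_eventuallyEq
    ((lt_mem_nhds hx).mono fun _ hy => σ_eq hy)
  have ddσ {x : ℝ} (hx : 0 < x) :=
    ((system hx).hasDerivAt_deriv_sigmaForm hx.ne').congr_of_eventuallyEq
      ((lt_mem_nhds hx).mono fun _ hy => (dσ hy).deriv)
  refine ⟨fun x hx => (dσ hx).differentiableAt.differentiableWithinAt,
    fun x hx => (ddσ hx).differentiableAt.differentiableWithinAt, fun a ha =>
    sigma_equation_of_sigmaResolvent_eq_zero (w := 2 * r a - a ^ 2) ?_ ?_⟩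
  · rw [σ_eq ha, (dσ ha).deriv, sigmaForm]
    ring
  · refine sigmaResolvent_eq_zero (system ha).diag_mul_prev (dσ ha).deriv ?_
    rw [(ddσ ha).deriv]
    field_simp
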